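/- arXiv:2012.08766 — 3 statements merged into one kernel-verified Lean document; each statement's English description precedes it below -/
import Mathlib

section
/- Let 1<p<∞, η>0 and w ∈ Q(ℝ₊). Let f be a monotone nondecreasing function, continuous on [0,η] and C¹ on (0,η], with f(η) ≤ 1. Then for every u ∈ C_c^1((0,η]): ∫_0^η ( |u'(t)|^p − Λ_p |u(t)|^p / F_η(t)^p ) W_p(t) dt ≥ ∫_0^η ( |u'(t)|^p − Λ_p |u(t)|^p / F_η(t)^p ) W_p(t) f(t) dt; in particular ∫_0^η |u'(t)|^p W_p(t) dt ≥ Λ_p ∫_0^η |u(t)|^p W_p(t) / F_η(t)^p dt. -/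
open MeasureTheory Set

/-- `f_η(t) = ∫_0^t w(s)⁻¹ ds`  (case `w ∈ Q(ℝ₊)`). -/
noncomputable def fQ (w : ℝ → ℝ) (t : ℝ) : ℝ := ∫ s in (0:ℝ)..t, (w s)⁻¹

/-- `F_η(t) = w(t) f_η(t)`. -/
noncomputable def FQ (w : ℝ → ℝ) (t : ℝ) : ℝ := w t * fQ w t

/-- `W_p(t) = w(t)^(p-1)`. -/
noncomputable def Wp (w : ℝ → ℝ) (p t : ℝ) : ℝ := w t ^ (p - 1)

/-- Young's inequality in the form used for Picone-type estimates. -/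
lemma mul_rpow_sub_one_le {p x b : ℝ} (hp : 1 < p) (hx : 0 ≤ x) (hb : 0 ≤ b) :
    p * (x * b ^ (p - 1)) ≤ x ^ p + (p - 1) * b ^ p := by
  have hpq := Real.HolderConjugate.conjExponent hp
  have hp0 : 0 < p := by linarith
  have hp1 : p - 1 ≠ 0 := by linarith
  have h := Real.young_inequality_of_nonneg hx (Real.rpow_nonneg hb (p - 1)) hpq
  have hexp : (p - 1) * Real.conjExponent p = p := by
    rw [Real.conjExponent]; field_simp
  rw [← Real.rpow_mul hb, hexp, Real.conjExponent] at h
  calc p * (x * b ^ (p - 1)) ≤ p * (x ^ p / p + b ^ p / (p / (p - 1))) := by gcongr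
    _ = x ^ p + (p - 1) * b ^ p := by field_simp

/-- The derivative of `(1 - 1 / p) ^ (p - 1) * |u| ^ p * φ ^ (1 - p)`, where `φ' = 1 / w`, is at
most the Hardy integrand. -/
lemma picone_pointwise {p x y w φ : ℝ} (hp : 1 < p) (hw : 0 < w) (hφ : 0 < φ) :
    (1 - 1 / p) ^ (p - 1) * (p * |y| ^ (p - 2) * y * x * φ ^ (1 - p) +
        |y| ^ p * (w⁻¹ * (1 - p) * φ ^ (1 - p - 1)))
      ≤ (|x| ^ p - (1 - 1 / p) ^ p * |y| ^ p / (w * φ) ^ p) * w ^ (p - 1) := by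
  have hp0 : 0 < p := by linarith
  have hk : 0 < 1 - 1 / p := by
    rw [sub_pos, div_lt_one hp0]; exact hp
  have hpk : p - 1 = p * (1 - 1 / p) := by field_simp
  set k := 1 - 1 / p
  set b := k * |y| / (w * φ) with hbdef
  have hb : 0 ≤ b := by positivity
  have hbp : b ^ p = k ^ p * |y| ^ p / (w * φ) ^ p := by
    rw [hbdef, Real.div_rpow (by positivity) (by positivity),
      Real.mul_rpow hk.le (abs_nonneg y)]
  have hbp1 : k ^ (p - 1) * |y| ^ (p - 1) * φ ^ (1 - p) = b ^ (p - 1) * w ^ (p - 1) := by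
    rw [hbdef, Real.div_rpow (by positivity) (by positivity),
      Real.mul_rpow hk.le (abs_nonneg y), Real.mul_rpow hw.le hφ.le,
      show 1 - p = -(p - 1) by ring, Real.rpow_neg hφ.le]
    have := Real.rpow_pos_of_pos hw (p - 1)
    have := Real.rpow_pos_of_pos hφ (p - 1)
    field_simp
  have hbp2 : k * (k ^ (p - 1) * |y| ^ p * (w⁻¹ * φ ^ (1 - p - 1))) = b ^ p * w ^ (p - 1) := by
    rw [hbp, Real.mul_rpow hw.le hφ.le, show 1 - p - 1 = -p by ring, Real.rpow_neg hφ.le,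
      Real.rpow_sub_one hk.ne', Real.rpow_sub_one hw.ne']
    have := Real.rpow_pos_of_pos hw p
    have := Real.rpow_pos_of_pos hφ p
    field_simp
  have hyx : |y| ^ (p - 2) * y * x ≤ |y| ^ (p - 1) * |x| := by
    have hy : |y| ^ (p - 1) = |y| ^ (p - 2) * |y| := by
      rcases (abs_nonneg y).eq_or_lt with h | h
      · rw [← h, Real.zero_rpow (by linarith), mul_zero]
      · rw [← Real.rpow_add_one h.ne']; congr 1; ring
    rw [hy, mul_assoc, mul_assoc, ← abs_mul]
    exact mul_le_mul_of_nonneg_left (le_abs_self _) (by positivity)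
  rw [← hbp]
  calc k ^ (p - 1) * (p * |y| ^ (p - 2) * y * x * φ ^ (1 - p) +
        |y| ^ p * (w⁻¹ * (1 - p) * φ ^ (1 - p - 1)))
      = k ^ (p - 1) * φ ^ (1 - p) * p * (|y| ^ (p - 2) * y * x)
        - (p - 1) * (k ^ (p - 1) * |y| ^ p * (w⁻¹ * φ ^ (1 - p - 1))) := by ring
    _ ≤ k ^ (p - 1) * φ ^ (1 - p) * p * (|y| ^ (p - 1) * |x|)
        - (p - 1) * (k ^ (p - 1) * |y| ^ p * (w⁻¹ * φ ^ (1 - p - 1))) := by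
        gcongr
    _ = p * |x| * (k ^ (p - 1) * |y| ^ (p - 1) * φ ^ (1 - p))
        - p * (k * (k ^ (p - 1) * |y| ^ p * (w⁻¹ * φ ^ (1 - p - 1)))) := by
        rw [hpk]; ring
    _ = (p * (|x| * b ^ (p - 1)) - p * b ^ p) * w ^ (p - 1) := by rw [hbp1, hbp2]; ring
    _ ≤ (|x| ^ p - b ^ p) * w ^ (p - 1) := by
        have := mul_rpow_sub_one_le hp (abs_nonneg x) hb
        exact mul_le_mul_of_nonneg_right (by linarith) (by positivity)

lemma intervalIntegrable_inv_of_integrableOn {w : ℝ → ℝ}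
    (hwQ : ∀ b, 0 < b → IntegrableOn (fun s => (w s)⁻¹) (Ioo 0 b)) {t : ℝ} (ht : 0 < t) :
    IntervalIntegrable (fun s => (w s)⁻¹) volume 0 t := by
  rw [intervalIntegrable_iff_integrableOn_Ioo_of_le ht.le]
  exact hwQ t ht

lemma fQ_pos {w : ℝ → ℝ} (hw_pos : ∀ t, 0 < t → 0 < w t)
    (hwQ : ∀ b, 0 < b → IntegrableOn (fun s => (w s)⁻¹) (Ioo 0 b)) {t : ℝ} (ht : 0 < t) :
    0 < fQ w t :=
  intervalIntegral.intervalIntegral_pos_of_pos_on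
    (intervalIntegrable_inv_of_integrableOn hwQ ht)
    (fun x hx => inv_pos.2 (hw_pos x hx.1)) ht

lemma hasDerivAt_fQ {w : ℝ → ℝ} (hw_pos : ∀ t, 0 < t → 0 < w t)
    (hw_cont : ContinuousOn w (Ioi 0))
    (hwQ : ∀ b, 0 < b → IntegrableOn (fun s => (w s)⁻¹) (Ioo 0 b)) {t : ℝ} (ht : 0 < t) :
    HasDerivAt (fQ w) (w t)⁻¹ t := by
  have hc : ContinuousOn (fun s => (w s)⁻¹) (Ioi 0) :=
    hw_cont.inv₀ fun s hs => (hw_pos s hs).ne'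
  exact intervalIntegral.integral_hasDerivAt_right
    (intervalIntegrable_inv_of_integrableOn hwQ ht)
    (hc.stronglyMeasurableAtFilter isOpen_Ioi t ht) (hc.continuousAt (Ioi_mem_nhds ht))

/-- The Hardy difference integrated against a nonnegative nonincreasing weight is nonnegative. -/
lemma integral_hardy_mul_nonneg {p a η : ℝ} (hp : 1 < p) (ha : 0 < a) (haη : a ≤ η)
    {w : ℝ → ℝ} (hw_pos : ∀ t, 0 < t → 0 < w t) (hw_cont : ContinuousOn w (Ioi 0))
    (hwQ : ∀ b, 0 < b → IntegrableOn (fun s => (w s)⁻¹) (Ioo 0 b))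
    {u u' h h' : ℝ → ℝ} (hu : ContinuousOn u (Icc a η))
    (hu' : ∀ t ∈ Ioo a η, HasDerivAt u (u' t) t) (hua : u a = 0)
    (hh : ContinuousOn h (Icc a η)) (hh' : ∀ t ∈ Ioo a η, HasDerivAt h (h' t) t)
    (hh_nonneg : ∀ t ∈ Icc a η, 0 ≤ h t) (hh'_nonpos : ∀ t ∈ Ioo a η, h' t ≤ 0)
    (hint : IntegrableOn (fun t =>
      (|u' t| ^ p - (1 - 1 / p) ^ p * |u t| ^ p / FQ w t ^ p) * Wp w p t * h t) (Icc a η)) :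
    0 ≤ ∫ t in a..η,
      (|u' t| ^ p - (1 - 1 / p) ^ p * |u t| ^ p / FQ w t ^ p) * Wp w p t * h t := by
  have hp0 : 0 < p := by linarith
  have hk : 0 < 1 - 1 / p := by
    rw [sub_pos, div_lt_one hp0]; exact hp
  have hpos : ∀ t ∈ Icc a η, 0 < fQ w t := fun t ht =>
    fQ_pos hw_pos hwQ (ha.trans_le ht.1)
  set G : ℝ → ℝ := fun t => (1 - 1 / p) ^ (p - 1) * (|u t| ^ p * fQ w t ^ (1 - p)) with hG
  have hG_nonneg : ∀ t ∈ Icc a η, 0 ≤ G t := fun t ht => by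
    have := hpos t ht
    positivity
  have hG_cont : ContinuousOn G (Icc a η) := by
    refine continuousOn_const.mul ((hu.abs.rpow_const fun _ _ => Or.inr hp0.le).mul ?_)
    refine ContinuousOn.rpow_const (fun t ht => ?_) fun t ht => Or.inl (hpos t ht).ne'
    exact (hasDerivAt_fQ hw_pos hw_cont hwQ
      (ha.trans_le ht.1)).continuousAt.continuousWithinAt
  have hGa : G a = 0 := by simp [hG, hua, Real.zero_rpow hp0.ne']
  have hderiv : ∀ t ∈ Ioo a η, HasDerivAt G ((1 - 1 / p) ^ (p - 1) *
      (p * |u t| ^ (p - 2) * u t * u' t * fQ w t ^ (1 - p) +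
        |u t| ^ p * ((w t)⁻¹ * (1 - p) * fQ w t ^ (1 - p - 1)))) t := fun t ht =>
    (((hasDerivAt_abs_rpow (u t) hp).comp t (hu' t ht)).mul
      ((hasDerivAt_fQ hw_pos hw_cont hwQ (ha.trans ht.1)).rpow_const
        (Or.inl (hpos t (Ioo_subset_Icc_self ht)).ne'))).const_mul _
  have hmain := intervalIntegral.sub_le_integral_of_hasDeriv_right_of_le haη (hG_cont.mul hh)
    (fun t ht => ((hderiv t ht).mul (hh' t ht)).hasDerivWithinAt) hint
    (fun t ht => by
      have ht' := Ioo_subset_Icc_self ht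
      have h1 := mul_le_mul_of_nonneg_right (picone_pointwise (x := u' t) (y := u t) hp
        (hw_pos t (ha.trans ht.1)) (hpos t ht')) (hh_nonneg t ht')
      have h2 := mul_nonpos_of_nonneg_of_nonpos (hG_nonneg t ht') (hh'_nonpos t ht)
      simp only [FQ, Wp]
      linarith)
  refine le_trans ?_ hmain
  simpa [hGa] using mul_nonneg (hG_nonneg η ⟨haη, le_rfl⟩) (hh_nonneg η ⟨haη, le_rfl⟩)

/-- For `w ∈ Q(ℝ₊)` and a nondecreasing `f` on `[0,η]`, continuous on
`[0,η]`, `C¹` on `(0,η]`, with `f(η) ≤ 1`, the Hardy difference dominates its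
`f`-weighted version; in particular the weighted Hardy inequality holds. -/
theorem hardy_monotone_comparison (p η : ℝ) (hp : 1 < p) (hη : 0 < η)
    (w : ℝ → ℝ)
    (hw_pos : ∀ t, 0 < t → 0 < w t)
    (hw_smooth : ContDiffOn ℝ 1 w (Set.Ioi 0))
    (hw_lim : ∃ a : ENNReal, Filter.Tendsto (fun t => ENNReal.ofReal (w t))
        (nhdsWithin (0:ℝ) (Set.Ioi 0)) (nhds a))
    (hwQ : ∀ b, 0 < b → MeasureTheory.IntegrableOn (fun s => (w s)⁻¹) (Set.Ioo 0 b))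
    (f : ℝ → ℝ)
    (hf_mono : MonotoneOn f (Set.Icc (0:ℝ) η))
    (hf_cont : ContinuousOn f (Set.Icc (0:ℝ) η))
    (hf_C1 : ContDiffOn ℝ 1 f (Set.Ioc (0:ℝ) η))
    (hfη : f η ≤ 1)
    (u u' : ℝ → ℝ)
    (hu : ∀ t ∈ Set.Ioc (0:ℝ) η, HasDerivWithinAt u (u' t) (Set.Ioc (0:ℝ) η) t)
    (hu'c : ContinuousOn u' (Set.Ioc (0:ℝ) η))
    (hsupp : ∃ a, 0 < a ∧ ∀ t ≤ a, u t = 0) :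
    ((∫ t in (0:ℝ)..η,
        (|u' t| ^ p - (1 - 1 / p) ^ p * |u t| ^ p / FQ w t ^ p) * Wp w p t)
      ≥ ∫ t in (0:ℝ)..η,
          (|u' t| ^ p - (1 - 1 / p) ^ p * |u t| ^ p / FQ w t ^ p) * Wp w p t * f t)
    ∧ (∫ t in (0:ℝ)..η, |u' t| ^ p * Wp w p t)
      ≥ (1 - 1 / p) ^ p * ∫ t in (0:ℝ)..η, |u t| ^ p * Wp w p t / FQ w t ^ p := by
  have hp0 : 0 < p := by linarith
  have hw_cont := hw_smooth.continuousOn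
  -- Near zero the function and its derivative both vanish.
  obtain ⟨a, ha, haη, hu0, hu'0⟩ : ∃ a, 0 < a ∧ a ≤ η ∧ (∀ t ≤ a, u t = 0) ∧
      ∀ t ∈ Ioc 0 a, u' t = 0 := by
    obtain ⟨c, hc, hc0⟩ := hsupp
    have hm : 0 < min c η := lt_min hc hη
    have hmc := min_le_left c η
    have hmη := min_le_right c η
    refine ⟨min c η / 2, by linarith, by linarith, fun t ht => hc0 t (by linarith),
      fun t ht => ?_⟩
    have htc : t < c := by linarith [ht.2]
    have htη : t < η := by linarith [ht.2]
    have h1 : HasDerivAt u (u' t) t := (hu t ⟨ht.1, htη.le⟩).hasDerivAt (Ioc_mem_nhds ht.1 htη)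
    have h2 : HasDerivAt u 0 t := (hasDerivAt_const t (0 : ℝ)).congr_of_eventuallyEq <| by
      filter_upwards [Iio_mem_nhds htc] with s hs using hc0 s (le_of_lt hs)
    exact h1.unique h2
  have hsub : Icc a η ⊆ Ioc 0 η := fun t ht => ⟨ha.trans_le ht.1, ht.2⟩
  have hsub' : Icc a η ⊆ Ioi 0 := fun t ht => ha.trans_le ht.1
  have hu_cont : ContinuousOn u (Icc a η) := fun t ht =>
    ((hu t (hsub ht)).continuousWithinAt).mono hsub
  have hu'_cont : ContinuousOn u' (Icc a η) := hu'c.mono hsub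
  have hu_deriv : ∀ t ∈ Ioo a η, HasDerivAt u (u' t) t := fun t ht =>
    (hu t ⟨ha.trans ht.1, ht.2.le⟩).hasDerivAt (Ioc_mem_nhds (ha.trans ht.1) ht.2)
  have hW_cont : ContinuousOn (Wp w p) (Icc a η) :=
    (hw_cont.mono hsub').rpow_const fun t ht => Or.inl (hw_pos t (hsub' ht)).ne'
  have hF_pos : ∀ t ∈ Icc a η, 0 < FQ w t := fun t ht =>
    mul_pos (hw_pos t (hsub' ht)) (fQ_pos hw_pos hwQ (hsub' ht))
  have hF_cont : ContinuousOn (fun t => FQ w t ^ p) (Icc a η) := by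
    refine ContinuousOn.rpow_const ((hw_cont.mono hsub').mul fun t ht => ?_)
      fun t ht => Or.inl (hF_pos t ht).ne'
    exact (hasDerivAt_fQ hw_pos hw_cont hwQ (hsub' ht)).continuousAt.continuousWithinAt
  have hF_ne : ∀ t ∈ Icc a η, FQ w t ^ p ≠ 0 := fun t ht =>
    (Real.rpow_pos_of_pos (hF_pos t ht) p).ne'
  have hA_cont : ContinuousOn (fun t => |u' t| ^ p * Wp w p t) (Icc a η) :=
    (hu'_cont.abs.rpow_const fun _ _ => Or.inr hp0.le).mul hW_cont
  have hup_cont : ContinuousOn (fun t => |u t| ^ p) (Icc a η) :=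
    hu_cont.abs.rpow_const fun _ _ => Or.inr hp0.le
  have hB_cont : ContinuousOn (fun t => |u t| ^ p * Wp w p t / FQ w t ^ p) (Icc a η) :=
    (hup_cont.mul hW_cont).div hF_cont hF_ne
  set E : ℝ → ℝ := fun t =>
    (|u' t| ^ p - (1 - 1 / p) ^ p * |u t| ^ p / FQ w t ^ p) * Wp w p t with hE
  have hE_eq : E = fun t => |u' t| ^ p * Wp w p t -
      (1 - 1 / p) ^ p * (|u t| ^ p * Wp w p t / FQ w t ^ p) := by
    funext t; simp only [hE]; ring
  have hE_cont : ContinuousOn E (Icc a η) := by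
    rw [hE_eq]
    exact hA_cont.sub (continuousOn_const.mul hB_cont)
  have hE_zero : ∀ t ∈ Ioc 0 a, E t = 0 := fun t ht => by
    simp [hE, hu0 t ht.2, hu'0 t ht, Real.zero_rpow hp0.ne']
  have hreduce : ∀ g : ℝ → ℝ, (∀ t ∈ Ioc 0 a, g t = 0) → ContinuousOn g (Icc a η) →
      ∫ t in (0:ℝ)..η, g t = ∫ t in a..η, g t := fun g hg0 hgc => by
    have hz : EqOn g (fun _ => 0) (Ioc 0 a) := hg0
    have hi : IntervalIntegrable g volume 0 a :=
      (intervalIntegrable_const (c := (0 : ℝ))).congr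
        (by rw [uIoc_of_le ha.le]; exact hz.symm)
    rw [← intervalIntegral.integral_add_adjacent_intervals hi
        (hgc.intervalIntegrable_of_Icc haη),
      intervalIntegral.integral_of_le ha.le, setIntegral_congr_fun measurableSet_Ioc hz]
    simp
  have hf_contIcc : ContinuousOn f (Icc a η) := hf_cont.mono (Icc_subset_Icc_left ha.le)
  have hf_deriv : ∀ t ∈ Ioo a η, HasDerivAt f (derivWithin f (Ioc 0 η) t) t := fun t ht =>
    have ht' : t ∈ Ioc 0 η := ⟨ha.trans ht.1, ht.2.le⟩
    ((hf_C1.differentiableOn one_ne_zero t ht').hasDerivWithinAt).hasDerivAt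
      (Ioc_mem_nhds ht'.1 ht.2)
  constructor
  · have hkey := integral_hardy_mul_nonneg (h := fun t => 1 - f t) hp ha haη hw_pos hw_cont hwQ
      hu_cont hu_deriv (hu0 a le_rfl) (continuousOn_const.sub hf_contIcc)
      (fun t ht => (hf_deriv t ht).const_sub 1)
      (fun t ht => sub_nonneg.2 <| (hf_mono ⟨(hsub' ht).le, ht.2⟩ ⟨hη.le, le_rfl⟩ ht.2).trans hfη)
      (fun t _ => neg_nonpos.2 (hf_mono.mono Ioc_subset_Icc_self).derivWithin_nonneg)
      ((hE_cont.mul (continuousOn_const.sub hf_contIcc)).integrableOn_Icc)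
    change ∫ t in (0:ℝ)..η, E t ≥ ∫ t in (0:ℝ)..η, E t * f t
    have hEf_cont : ContinuousOn (fun t => E t * f t) (Icc a η) := hE_cont.mul hf_contIcc
    rw [hreduce E hE_zero hE_cont,
      hreduce _ (fun t ht => by rw [hE_zero t ht, zero_mul]) hEf_cont, ge_iff_le,
      ← sub_nonneg, ← intervalIntegral.integral_sub
        (hE_cont.intervalIntegrable_of_Icc haη) (hEf_cont.intervalIntegrable_of_Icc haη)]
    convert hkey using 3
    simp only [hE]
    ring
  · have hkey := integral_hardy_mul_nonneg (h := fun _ => 1) (h' := fun _ => 0) hp ha haη hw_pos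
      hw_cont hwQ hu_cont hu_deriv (hu0 a le_rfl) continuousOn_const
      (fun t _ => hasDerivAt_const t 1) (fun _ _ => zero_le_one) (fun _ _ => le_rfl)
      ((hE_cont.mul continuousOn_const).integrableOn_Icc)
    have hkey' : 0 ≤ ∫ t in a..η, E t := by simpa only [mul_one] using hkey
    rw [hE_eq, intervalIntegral.integral_sub (hA_cont.intervalIntegrable_of_Icc haη)
      ((hB_cont.intervalIntegrable_of_Icc haη).const_mul _),
      intervalIntegral.integral_const_mul, sub_nonneg] at hkey'
    rw [hreduce _ (fun t ht => by simp [hu'0 t ht, Real.zero_rpow hp0.ne']) hA_cont,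
      hreduce _ (fun t ht => by simp [hu0 t ht.2, Real.zero_rpow hp0.ne']) hB_cont]
    exact hkey'
end

section
/- Let 1<p<∞, η>0 and α > 1/p'. Then for every u ∈ C_c^1((0,η]) one has ∫_0^η |u'(t)|^p t^{αp} dt + Λ_{α,p}^{1/p'} η^{αp - (p-1)} |u(η)|^p ≥ Λ_{α,p} ∫_0^η |u(t)|^p t^{(α-1)p} dt. -/
open MeasureTheory Set

/-- Young's inequality in the form used to compare `|u|^p` with `|u'|^p`. -/
theorem Real.mul_rpow_sub_one_le_rpow_add {p a b : ℝ} (hp : 1 < p) (ha : 0 ≤ a) (hb : 0 ≤ b) :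
    p * (a * b ^ (p - 1)) ≤ a ^ p + (p - 1) * b ^ p := by
  have hp1 : p - 1 ≠ 0 := by linarith
  have hp0 : p ≠ 0 := by linarith
  have h := Real.young_inequality_of_nonneg ha (Real.rpow_nonneg hb (p - 1))
    (Real.HolderConjugate.conjExponent hp)
  rw [← Real.rpow_mul hb, Real.conjExponent, mul_div_cancel₀ _ hp1] at h
  calc p * (a * b ^ (p - 1)) ≤ p * (a ^ p / p + b ^ p / (p / (p - 1))) := by gcongr
    _ = a ^ p + (p - 1) * b ^ p := by field_simp

/-- The pointwise inequality whose integral is the weighted Hardy inequality; the right-hand side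
is the derivative of `c ^ (p - 1) * (t ^ (c * p) * |u t| ^ p)` when `u t = x` and `u' t = y`. -/
theorem hardy_pointwise_le {p c t : ℝ} (x y : ℝ) (hp : 1 < p) (hc : 0 < c) (ht : 0 < t) :
    c ^ p * (|x| ^ p * t ^ (c * p - 1)) - |y| ^ p * t ^ (c * p + (p - 1)) ≤
      c ^ (p - 1) * (c * p * t ^ (c * p - 1) * |x| ^ p
        + t ^ (c * p) * (p * |x| ^ (p - 2) * x * y)) := by
  have hcp : c ^ (p - 1) * c = c ^ p := by
    rw [← Real.rpow_add_one hc.ne', sub_add_cancel]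
  have hx : |x| ^ (p - 2) * |x| = |x| ^ (p - 1) := by
    rcases eq_or_ne x 0 with rfl | hx
    · simp [Real.zero_rpow (show p - 1 ≠ 0 by linarith)]
    · rw [← Real.rpow_add_one (abs_ne_zero.2 hx)]; ring_nf
  have hxy : -(|x| ^ (p - 1) * |y|) ≤ |x| ^ (p - 2) * x * y := by
    rw [← hx, mul_assoc, mul_assoc, ← abs_mul, ← mul_neg]
    exact mul_le_mul_of_nonneg_left (neg_abs_le _) (by positivity)
  have key := Real.mul_rpow_sub_one_le_rpow_add hp
    (a := |y| * t) (b := c * |x|) (by positivity) (by positivity)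
  rw [Real.mul_rpow (abs_nonneg y) ht.le, Real.mul_rpow hc.le (abs_nonneg x),
    Real.mul_rpow hc.le (abs_nonneg x)] at key
  have e1 : t ^ (c * p) = t ^ (c * p - 1) * t := by
    rw [← Real.rpow_add_one ht.ne', sub_add_cancel]
  have e2 : t ^ (c * p + (p - 1)) = t ^ (c * p - 1) * t ^ p := by
    rw [← Real.rpow_add ht]; ring_nf
  have hw : 0 ≤ t ^ (c * p - 1) := by positivity
  have h1 := mul_le_mul_of_nonneg_left key hw
  have h2 := mul_le_mul_of_nonneg_left hxy
    (show 0 ≤ c ^ (p - 1) * t ^ (c * p - 1) * t * p by positivity)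
  rw [e1, e2, ← hcp] at *
  linarith

/-- Hardy inequality with power weights on an interval away from the origin. -/
theorem hardy_power_interval {p c δ η : ℝ} {u u' : ℝ → ℝ} (hp : 1 < p) (hc : 0 < c) (hδ : 0 < δ)
    (hδη : δ ≤ η) (hu : ContinuousOn u (Icc δ η)) (hu'c : ContinuousOn u' (Icc δ η))
    (hd : ∀ t ∈ Ioo δ η, HasDerivAt u (u' t) t) (huδ : u δ = 0) :
    c ^ p * (∫ t in δ..η, |u t| ^ p * t ^ (c * p - 1)) ≤
      (∫ t in δ..η, |u' t| ^ p * t ^ (c * p + (p - 1)))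
        + c ^ (p - 1) * (η ^ (c * p) * |u η| ^ p) := by
  have hp0 : 0 < p := by linarith
  have hpow (r : ℝ) : ContinuousOn (fun t : ℝ => t ^ r) (Icc δ η) := fun t ht =>
    (Real.continuousAt_rpow_const t r (Or.inl (hδ.trans_le ht.1).ne')).continuousWithinAt
  have habs {v : ℝ → ℝ} (hv : ContinuousOn v (Icc δ η)) :
      ContinuousOn (fun t => |v t| ^ p) (Icc δ η) :=
    hv.abs.rpow_const fun _ _ => Or.inr hp0.le
  have c1 : ContinuousOn (fun t => c ^ p * (|u t| ^ p * t ^ (c * p - 1))) (Icc δ η) :=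
    continuousOn_const.mul ((habs hu).mul (hpow _))
  have c2 : ContinuousOn (fun t => |u' t| ^ p * t ^ (c * p + (p - 1))) (Icc δ η) :=
    (habs hu'c).mul (hpow _)
  have h := intervalIntegral.integral_le_sub_of_hasDeriv_right_of_le hδη
    (g := fun t => c ^ (p - 1) * (t ^ (c * p) * |u t| ^ p))
    (continuousOn_const.mul ((hpow _).mul (habs hu)))
    (fun t ht => (((Real.hasDerivAt_rpow_const (Or.inl (hδ.trans ht.1).ne')).mul
      ((hasDerivAt_abs_rpow (u t) hp).comp t (hd t ht))).const_mul _).hasDerivWithinAt)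
    (c1.sub c2).integrableOn_Icc
    (fun t ht => hardy_pointwise_le (u t) (u' t) hp hc (hδ.trans ht.1))
  rw [← uIcc_of_le hδη] at c1 c2
  have hs := intervalIntegral.integral_sub (μ := volume) c1.intervalIntegrable c2.intervalIntegrable
  simp only [Pi.sub_apply] at h
  rw [hs, intervalIntegral.integral_const_mul] at h
  simp only [huδ, abs_zero, Real.zero_rpow hp0.ne', mul_zero, sub_zero] at h
  linarith

/-- Power-weight Hardy inequality in the supercritical case
`α > 1/p' = (p-1)/p`, with one-sided boundary term. -/
theorem hardy_power_supercritical (p η α : ℝ) (hp : 1 < p) (hη : 0 < η)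
    (hα : (p - 1) / p < α)
    (u u' : ℝ → ℝ)
    (hu : ∀ t ∈ Set.Ioc (0:ℝ) η, HasDerivWithinAt u (u' t) (Set.Ioc (0:ℝ) η) t)
    (hu'c : ContinuousOn u' (Set.Ioc (0:ℝ) η))
    (hsupp : ∃ a, 0 < a ∧ ∀ t ≤ a, u t = 0) :
    (∫ t in (0:ℝ)..η, |u' t| ^ p * t ^ (α * p))
      + (|(p - 1) / p - α| ^ p) ^ ((p - 1) / p) * η ^ (α * p - (p - 1)) * |u η| ^ p
    ≥ |(p - 1) / p - α| ^ p * ∫ t in (0:ℝ)..η, |u t| ^ p * t ^ ((α - 1) * p) := by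
  obtain ⟨a, ha, hua⟩ := hsupp
  have hp0 : 0 < p := by linarith
  obtain ⟨c, hc, rfl⟩ : ∃ c, 0 < c ∧ α = (p - 1) / p + c :=
    ⟨α - (p - 1) / p, by linarith, by ring⟩
  obtain ⟨δ, hδ, hδ'⟩ := exists_between (lt_min ha hη)
  obtain ⟨hδa, hδη⟩ := lt_min_iff.1 hδ'
  have hd : ∀ t ∈ Ioo 0 η, HasDerivAt u (u' t) t := fun t ht =>
    (hu t ⟨ht.1, ht.2.le⟩).hasDerivAt (Ioc_mem_nhds ht.1 ht.2)
  have hu'0 : ∀ t ∈ Ioc 0 δ, u' t = 0 := fun t ht =>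
    (hd t ⟨ht.1, ht.2.trans_lt hδη⟩).unique <| (hasDerivAt_const t (0 : ℝ)).congr_of_eventuallyEq <|
      (eventually_le_nhds (ht.2.trans_lt hδa)).mono hua
  have hsub : Icc δ η ⊆ Ioc 0 η := fun t ht => ⟨hδ.trans_le ht.1, ht.2⟩
  have hcut {v : ℝ → ℝ} (r : ℝ) (hv : ∀ t ∈ Ioc 0 δ, v t = 0) :
      ∫ t in (0:ℝ)..η, |v t| ^ p * t ^ r = ∫ t in δ..η, |v t| ^ p * t ^ r := by
    rw [intervalIntegral.integral_of_le hη.le, intervalIntegral.integral_of_le hδη.le]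
    refine setIntegral_eq_of_subset_of_forall_sdiff_eq_zero measurableSet_Ioc
      (Ioc_subset_Ioc_left hδ.le) fun t ht => ?_
    have htδ : t ≤ δ := not_lt.1 fun h => ht.2 ⟨h, ht.1.2⟩
    simp [hv t ⟨ht.1.1, htδ⟩, Real.zero_rpow hp0.ne']
  have key := hardy_power_interval hp hc hδ hδη.le
    (fun t ht => (hu t (hsub ht)).continuousWithinAt.mono hsub) (hu'c.mono hsub)
    (fun t ht => hd t ⟨hδ.trans ht.1, ht.2⟩) (hua δ hδa.le)
  have hΛ : |(p - 1) / p - ((p - 1) / p + c)| = c := by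
    rw [sub_add_cancel_left, abs_neg, abs_of_pos hc]
  have e1 : ((p - 1) / p + c) * p = c * p + (p - 1) := by field_simp; ring
  have e2 : ((p - 1) / p + c - 1) * p = c * p - 1 := by field_simp; ring
  rw [hcut _ hu'0, hcut _ fun t ht => hua t (ht.2.trans hδa.le), hΛ, e1, e2, add_sub_cancel_right,
    ← Real.rpow_mul hc.le, mul_div_cancel₀ _ hp0.ne', mul_assoc]
  exact key
end

section
/- Let 1<p<∞, η>0 and R > e. Then for every u ∈ C_c^1((0,η]) one has ∫_0^η |u'(t)|^p t^{p-1} dt + Λ_p^{1/p'} (log R)^{1-p} |u(η)|^p ≥ Λ_p ∫_0^η |u(t)|^p / ( t ( log( Rη/t ) )^p ) dt. -/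
open MeasureTheory Set

/-- Young's inequality in the form adapted to Hardy inequalities. -/
lemma mul_mul_rpow_sub_one_le {p A B : ℝ} (hp : 1 < p) (hA : 0 ≤ A) (hB : 0 ≤ B) :
    p * (A * B ^ (p - 1)) ≤ A ^ p + (p - 1) * B ^ p := by
  have hp0 : 0 < p := by linarith
  have hp1 : p - 1 ≠ 0 := by linarith
  have h := Real.young_inequality_of_nonneg hA (Real.rpow_nonneg hB (p - 1))
    (Real.HolderConjugate.conjExponent hp)
  rw [← Real.rpow_mul hB, Real.conjExponent, mul_div_cancel₀ _ hp1] at h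
  calc p * (A * B ^ (p - 1)) ≤ p * (A ^ p / p + B ^ p / (p / (p - 1))) := by gcongr
    _ = A ^ p + (p - 1) * B ^ p := by field_simp

/-- The pointwise inequality behind the critical Hardy inequality: the derivative of
`-(1 - 1 / p) ^ (p - 1) * |u| ^ p * L ^ (1 - p)`, where `L' = -1 / t`, is bounded by the difference
of the two integrands. -/
lemma hardy_critical_pointwise {p t L x v : ℝ} (hp : 1 < p) (ht : 0 < t) (hL : 0 < L) :
    -((1 - 1 / p) ^ (p - 1) * (p * |x| ^ (p - 2) * x * v * L ^ (1 - p)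
      + |x| ^ p * (-(1 / t) * (1 - p) * L ^ (1 - p - 1))))
    ≤ |v| ^ p * t ^ (p - 1) - (1 - 1 / p) ^ p * (|x| ^ p / (t * L ^ p)) := by
  have hp0 : 0 < p := by linarith
  have hc : 0 < 1 - 1 / p := by
    rw [sub_pos, div_lt_one hp0]; exact hp
  set c := 1 - 1 / p with hc_def
  have hpc : p - 1 = p * c := by rw [hc_def]; field_simp
  have hx : -(|x| ^ (p - 2) * x * v) ≤ |x| ^ (p - 1) * |v| := by
    rcases eq_or_ne x 0 with rfl | hx
    · simp only [mul_zero, zero_mul, neg_zero]; positivity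
    · have hx0 : 0 < |x| := abs_pos.2 hx
      have h1 : |x| ^ (p - 1) = |x| ^ (p - 2) * |x| := by
        rw [← Real.rpow_add_one hx0.ne']; congr 1; ring
      have h2 : -(x * v) ≤ |x| * |v| := by rw [← abs_mul]; exact neg_le_abs _
      rw [h1]
      have := mul_le_mul_of_nonneg_left h2 (Real.rpow_nonneg hx0.le (p - 2))
      linarith
  have hy := mul_mul_rpow_sub_one_le hp (A := |v| * t) (B := c * |x| / L)
    (by positivity) (by positivity)
  rw [Real.mul_rpow (abs_nonneg v) ht.le, Real.div_rpow (by positivity) hL.le,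
    Real.div_rpow (by positivity) hL.le, Real.mul_rpow hc.le (abs_nonneg x),
    Real.mul_rpow hc.le (abs_nonneg x)] at hy
  have e1 : t ^ p = t ^ (p - 1) * t := by rw [← Real.rpow_add_one ht.ne']; congr 1; ring
  have e2 : L ^ (1 - p) = (L ^ (p - 1))⁻¹ := by rw [← Real.rpow_neg hL.le]; congr 1; ring
  have e3 : L ^ (1 - p - 1) = (L ^ p)⁻¹ := by rw [← Real.rpow_neg hL.le]; congr 1; ring
  have e4 : c ^ p = c ^ (p - 1) * c := by rw [← Real.rpow_add_one hc.ne']; congr 1; ring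
  rw [e2, e3]
  have hK : 0 ≤ c ^ (p - 1) * p * (L ^ (p - 1))⁻¹ := by positivity
  have h1 := mul_le_mul_of_nonneg_left hx hK
  have h2 : c ^ (p - 1) * p * (L ^ (p - 1))⁻¹ * (|x| ^ (p - 1) * |v|)
      ≤ |v| ^ p * t ^ (p - 1) + (p - 1) * (c ^ p * |x| ^ p / L ^ p) / t := by
    rw [e1] at hy
    rw [← mul_le_mul_iff_left₀ ht]
    calc _ = p * (|v| * t * (c ^ (p - 1) * |x| ^ (p - 1) / L ^ (p - 1))) := by ring
      _ ≤ _ := hy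
      _ = _ := by field_simp
  have h3 : c ^ (p - 1) * (|x| ^ p * ((1 / t) * (p - 1) * (L ^ p)⁻¹))
      = p * (c ^ p * (|x| ^ p / (t * L ^ p))) := by
    rw [e4, hpc]; field_simp
  have h4 : (p - 1) * (c ^ p * |x| ^ p / L ^ p) / t
      = (p - 1) * (c ^ p * (|x| ^ p / (t * L ^ p))) := by field_simp
  linarith

/-- Critical power-weight Hardy inequality (`α = 1/p'`), with
logarithmic Hardy potential and one-sided boundary term, for `R > e`. -/
theorem hardy_power_critical (p η R : ℝ) (hp : 1 < p) (hη : 0 < η)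
    (hR : Real.exp 1 < R)
    (u u' : ℝ → ℝ)
    (hu : ∀ t ∈ Set.Ioc (0:ℝ) η, HasDerivWithinAt u (u' t) (Set.Ioc (0:ℝ) η) t)
    (hu'c : ContinuousOn u' (Set.Ioc (0:ℝ) η))
    (hsupp : ∃ a, 0 < a ∧ ∀ t ≤ a, u t = 0) :
    (∫ t in (0:ℝ)..η, |u' t| ^ p * t ^ (p - 1))
      + ((1 - 1 / p) ^ p) ^ ((p - 1) / p) * Real.log R ^ (1 - p) * |u η| ^ p
    ≥ (1 - 1 / p) ^ p *
        ∫ t in (0:ℝ)..η, |u t| ^ p / (t * Real.log (R * η / t) ^ p) := by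
  obtain ⟨a, ha, hua⟩ := hsupp
  have hp0 : 0 < p := by linarith
  have hR1 : 1 < R := lt_trans (Real.one_lt_exp_iff.2 one_pos) hR
  have hR0 : 0 < R := by linarith
  have hc : 0 < 1 - 1 / p := by rw [sub_pos, div_lt_one hp0]; exact hp
  obtain ⟨b, hb, hba, hbη⟩ : ∃ b, 0 < b ∧ b < a ∧ b < η :=
    ⟨min a η / 2, by positivity, by linarith [min_le_left a η, lt_min ha hη],
      by linarith [min_le_right a η, lt_min ha hη]⟩
  have hsub : Icc b η ⊆ Ioc 0 η := fun t ht => ⟨hb.trans_le ht.1, ht.2⟩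
  have hderiv : ∀ t ∈ Ioo 0 η, HasDerivAt u (u' t) t := fun t ht =>
    (hu t ⟨ht.1, ht.2.le⟩).hasDerivAt (Ioc_mem_nhds ht.1 ht.2)
  have hu'0 : ∀ t ∈ Ioc 0 b, u' t = 0 := fun t ht =>
    (hderiv t ⟨ht.1, ht.2.trans_lt hbη⟩).unique <|
      (hasDerivAt_const t (0 : ℝ)).congr_of_eventuallyEq <|
        (eventually_le_nhds (ht.2.trans_lt hba)).mono hua
  have hLpos : ∀ t ∈ Icc b η, 0 < Real.log (R * η / t) := fun t ht => by
    have ht0 := hb.trans_le ht.1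
    refine Real.log_pos ((one_lt_div ht0).2 ?_)
    nlinarith [ht.2]
  have hu_cont : ContinuousOn u (Icc b η) := fun t ht =>
    ((hu t (hsub ht)).continuousWithinAt).mono hsub
  have hL_cont : ContinuousOn (fun t => Real.log (R * η / t)) (Icc b η) :=
    ContinuousOn.log (continuousOn_const.div continuousOn_id fun t ht => (hb.trans_le ht.1).ne')
      fun t ht => (div_pos (mul_pos hR0 hη) (hb.trans_le ht.1)).ne'
  have hf_cont : ContinuousOn (fun t => |u' t| ^ p * t ^ (p - 1)) (Icc b η) :=
    ((hu'c.mono hsub).abs.rpow_const fun _ _ => Or.inr hp0.le).mul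
      (continuousOn_id.rpow_const fun t ht => Or.inl (hb.trans_le ht.1).ne')
  have hg_cont : ContinuousOn (fun t => |u t| ^ p / (t * Real.log (R * η / t) ^ p)) (Icc b η) :=
    (hu_cont.abs.rpow_const fun _ _ => Or.inr hp0.le).div
      (continuousOn_id.mul (hL_cont.rpow_const fun _ _ => Or.inr hp0.le))
      fun t ht => (mul_pos (hb.trans_le ht.1) (Real.rpow_pos_of_pos (hLpos t ht) p)).ne'
  have hf_int := hf_cont.intervalIntegrable_of_Icc (μ := volume) hbη.le
  have hg_int := hg_cont.intervalIntegrable_of_Icc (μ := volume) hbη.le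
  have hsplit : ∀ f : ℝ → ℝ, (∀ t ∈ Ioc 0 b, f t = 0) → IntervalIntegrable f volume b η →
      ∫ t in (0:ℝ)..η, f t = ∫ t in b..η, f t := fun f hf hfi => by
    have hf' : EqOn f (fun _ => 0) (uIoc 0 b) := by
      rw [uIoc_of_le hb.le]; exact hf
    have h0 : IntervalIntegrable f volume 0 b :=
      (intervalIntegrable_const (c := (0 : ℝ))).congr hf'.symm
    rw [← intervalIntegral.integral_add_adjacent_intervals h0 hfi,
      intervalIntegral.integral_zero_ae (Filter.Eventually.of_forall hf'), zero_add]
  rw [hsplit _ (fun t ht => by simp [hu'0 t ht, Real.zero_rpow hp0.ne']) hf_int,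
    hsplit _ (fun t ht => by simp [hua t (ht.2.trans hba.le), Real.zero_rpow hp0.ne']) hg_int]
  have key := intervalIntegral.sub_le_integral_of_hasDeriv_right_of_le hbη.le
    (g := fun t => -((1 - 1 / p) ^ (p - 1) * (|u t| ^ p * Real.log (R * η / t) ^ (1 - p))))
    (g' := fun t => -((1 - 1 / p) ^ (p - 1) * (p * |u t| ^ (p - 2) * u t * u' t
        * Real.log (R * η / t) ^ (1 - p)
      + |u t| ^ p * (-(1 / t) * (1 - p) * Real.log (R * η / t) ^ (1 - p - 1)))))
    (φ := fun t => |u' t| ^ p * t ^ (p - 1)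
      - (1 - 1 / p) ^ p * (|u t| ^ p / (t * Real.log (R * η / t) ^ p)))
    ((continuousOn_const.mul ((hu_cont.abs.rpow_const fun _ _ => Or.inr hp0.le).mul
      (hL_cont.rpow_const fun t ht => Or.inl (hLpos t ht).ne'))).neg)
    (fun t ht => by
      have ht0 : 0 < t := hb.trans ht.1
      have hL := hLpos t ⟨ht.1.le, ht.2.le⟩
      have h1 := (hasDerivAt_abs_rpow (u t) hp).comp t (hderiv t ⟨ht0, ht.2⟩)
      have h2 : HasDerivAt (fun s => Real.log (R * η / s)) (-(1 / t)) t := by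
        have h := ((hasDerivAt_const t (R * η)).div (hasDerivAt_id t) ht0.ne').log
          (div_pos (mul_pos hR0 hη) ht0).ne'
        have h' : -(1 / t) = (0 * t - R * η * 1) / t ^ 2 / (R * η / t) := by
          field_simp
          ring
        rw [h']
        exact h
      have h3 := h1.mul (h2.rpow_const (p := 1 - p) (Or.inl hL.ne'))
      exact (h3.const_mul _).neg.hasDerivWithinAt)
    ((hf_cont.sub (continuousOn_const.mul hg_cont)).integrableOn_compact isCompact_Icc)
    (fun t ht => hardy_critical_pointwise hp (hb.trans ht.1) (hLpos t ⟨ht.1.le, ht.2.le⟩))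
  rw [intervalIntegral.integral_sub hf_int (hg_int.const_mul _),
    intervalIntegral.integral_const_mul] at key
  have hub : |u b| ^ p = 0 := by rw [hua b hba.le, abs_zero, Real.zero_rpow hp0.ne']
  have hcc : ((1 - 1 / p) ^ p) ^ ((p - 1) / p) = (1 - 1 / p) ^ (p - 1) := by
    rw [← Real.rpow_mul hc.le, mul_div_cancel₀ _ hp0.ne']
  simp only [hub, mul_div_cancel_right₀ R hη.ne'] at key
  rw [hcc]
  linarith
end
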